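/- For the full shift T on X = ∏_{n∈ℤ} M over a perfect Polish metric space M, the set {μ ∈ M(T) : R̄(x) = +∞ for μ-a.e. x ∈ X} of invariant measures whose upper recurrence rate is infinite almost everywhere is a dense Gδ subset of M(T). -/

import Mathlib

open Filter MeasureTheory Topology Metric Set
open scoped ENNReal NNReal

noncomputable section
attribute [local instance] Classical.propDecidable

/-- The full (bilateral) shift on the product space `ℤ → M`: `(T x) i = x (i - 1)`. -/
def fullShift {M : Type*} (x : ℤ → M) : ℤ → M := fun i => x (i - 1)

/-- The metric `d(x,y) = ∑_{n ∈ ℤ} 2^{-|n|} ρ(xₙ,yₙ)/(1 + ρ(xₙ,yₙ))` on `ℤ → M`,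
compatible with the product topology. -/
def shiftDist {M : Type*} [MetricSpace M] (x y : ℤ → M) : ℝ :=
  ∑' n : ℤ, (1 / 2 : ℝ) ^ n.natAbs * (dist (x n) (y n) / (1 + dist (x n) (y n)))

/-- Lower local dimension `d̲_μ(x) = liminf_{ε → 0⁺} log μ(B(x,ε)) / log ε` of `μ` at `x`,
with respect to the distance function `d`; by convention it is `∞` if some ball
centered at `x` has measure zero. -/
def lowerLocalDim {X : Type*} [MeasurableSpace X] (d : X → X → ℝ)
    (μ : Measure X) (x : X) : ℝ≥0∞ :=
  if ∃ ε > 0, μ {y | d x y < ε} = 0 then ⊤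
  else liminf (fun ε : ℝ =>
    ENNReal.ofReal (Real.log (μ {y | d x y < ε}).toReal / Real.log ε)) (𝓝[>] (0 : ℝ))

/-- Upper local dimension `d̄_μ(x) = limsup_{ε → 0⁺} log μ(B(x,ε)) / log ε`. -/
def upperLocalDim {X : Type*} [MeasurableSpace X] (d : X → X → ℝ)
    (μ : Measure X) (x : X) : ℝ≥0∞ :=
  if ∃ ε > 0, μ {y | d x y < ε} = 0 then ⊤
  else limsup (fun ε : ℝ =>
    ENNReal.ofReal (Real.log (μ {y | d x y < ε}).toReal / Real.log ε)) (𝓝[>] (0 : ℝ))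

/-- The ratio `log τ_r(x) / (- log r)`, where `τ_r(x) = inf {n ≥ 1 | Tⁿ x ∈ B̄(x,r)}` is the
first return time of `x` to the closed ball `B̄(x,r)`; by convention it is `∞` when the
return time is infinite. -/
def recRatio {X : Type*} (d : X → X → ℝ) (T : X → X) (x : X) (r : ℝ) : ℝ≥0∞ :=
  if ∃ n : ℕ, 1 ≤ n ∧ d (T^[n] x) x ≤ r then
    ENNReal.ofReal
      (Real.log ((sInf {n : ℕ | 1 ≤ n ∧ d (T^[n] x) x ≤ r} : ℕ) : ℝ) / (- Real.log r))
  else ⊤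

/-- Lower recurrence rate `R̲(x) = liminf_{r → 0⁺} log τ_r(x) / (- log r)`. -/
def lowerRecRate {X : Type*} (d : X → X → ℝ) (T : X → X) (x : X) : ℝ≥0∞ :=
  liminf (recRatio d T x) (𝓝[>] (0 : ℝ))

/-- Upper recurrence rate `R̄(x) = limsup_{r → 0⁺} log τ_r(x) / (- log r)`. -/
def upperRecRate {X : Type*} (d : X → X → ℝ) (T : X → X) (x : X) : ℝ≥0∞ :=
  limsup (recRatio d T x) (𝓝[>] (0 : ℝ))

/-- The ratio `log τ_r(x,y) / (- log r)`, where `τ_r(x,y) = inf {n ≥ 1 | Tⁿ x ∈ B̄(y,r)}` is the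
first entrance time of the orbit of `x` into the closed ball `B̄(y,r)`; by convention `∞`
when the entrance time is infinite. -/
def waitRatio {X : Type*} (d : X → X → ℝ) (T : X → X) (x y : X) (r : ℝ) : ℝ≥0∞ :=
  if ∃ n : ℕ, 1 ≤ n ∧ d (T^[n] x) y ≤ r then
    ENNReal.ofReal
      (Real.log ((sInf {n : ℕ | 1 ≤ n ∧ d (T^[n] x) y ≤ r} : ℕ) : ℝ) / (- Real.log r))
  else ⊤

/-- Lower quantitative waiting time indicator `R̲(x,y)`. -/
def lowerWaitRate {X : Type*} (d : X → X → ℝ) (T : X → X) (x y : X) : ℝ≥0∞ :=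
  liminf (waitRatio d T x y) (𝓝[>] (0 : ℝ))

/-- Upper quantitative waiting time indicator `R̄(x,y)`. -/
def upperWaitRate {X : Type*} (d : X → X → ℝ) (T : X → X) (x y : X) : ℝ≥0∞ :=
  limsup (waitRatio d T x y) (𝓝[>] (0 : ℝ))

/-- The entropy `H(P) = ∑_c -μ(P_c) log μ(P_c)` of the finite measurable partition
`P_c = f ⁻¹ {c}` of `X` induced by a map `f` into a finite set. -/
def partitionEntropy {X F : Type*} [MeasurableSpace X] [Fintype F]
    (μ : Measure X) (f : X → F) : ℝ :=
  ∑ c : F, Real.negMulLog ((μ (f ⁻¹' {c})).toReal)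

/-- The Kolmogorov–Sinai (measure-theoretic) entropy `h_μ(T)`: the supremum, over all finite
measurable partitions (coded by measurable maps `f : X → Fin k`), of the limit of
`H(⋁_{i<n} T⁻ⁱ P) / n`. -/
def kolmogorovSinaiEntropy {X : Type*} [MeasurableSpace X] (T : X → X) (μ : Measure X) :
    ℝ≥0∞ :=
  ⨆ (k : ℕ) (f : X → Fin k) (_ : Measurable f),
    ENNReal.ofReal
      (liminf (fun n : ℕ =>
        partitionEntropy μ (fun x (i : Fin n) => f (T^[(i : ℕ)] x)) / n) atTop)

end

section Helpers

open ProbabilityTheory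

/-- The open set of points admitting a small radius `r` with first return time `> r^{-N}`. -/
def slowSet (M : Type*) [MetricSpace M] (N : ℕ) : Set (ℤ → M) :=
  {x | ∃ r : ℝ, 0 < r ∧ r < 1 / (N + 2) ∧
    ∀ k : ℕ, 1 ≤ k → (k : ℝ) * r ^ N ≤ 1 → r < shiftDist (fullShift^[k] x) x}

lemma summable_half_natAbs : Summable (fun n : ℤ => (1 / 2 : ℝ) ^ n.natAbs) := by
  apply Summable.of_nat_of_neg
  · simpa using summable_geometric_two
  · simpa using summable_geometric_two

lemma ratio_le_one {t : ℝ} (ht : 0 ≤ t) : t / (1 + t) ≤ 1 := by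
  rw [div_le_one (by linarith)]; linarith

lemma shift_term_nonneg {M : Type*} [MetricSpace M] (x y : ℤ → M) (n : ℤ) :
    0 ≤ (1 / 2 : ℝ) ^ n.natAbs * (dist (x n) (y n) / (1 + dist (x n) (y n))) := by
  positivity

lemma shift_term_le {M : Type*} [MetricSpace M] (x y : ℤ → M) (n : ℤ) :
    (1 / 2 : ℝ) ^ n.natAbs * (dist (x n) (y n) / (1 + dist (x n) (y n)))
      ≤ (1 / 2 : ℝ) ^ n.natAbs :=
  mul_le_of_le_one_right (by positivity) (ratio_le_one dist_nonneg)

lemma term_le_shiftDist {M : Type*} [MetricSpace M] (x y : ℤ → M) (n : ℤ) :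
    (1 / 2 : ℝ) ^ n.natAbs * (dist (x n) (y n) / (1 + dist (x n) (y n))) ≤ shiftDist x y :=
  (Summable.of_nonneg_of_le (shift_term_nonneg x y) (shift_term_le x y)
    summable_half_natAbs).le_tsum n (fun j _ => shift_term_nonneg x y j)

lemma fullShift_iterate {M : Type*} (k : ℕ) (x : ℤ → M) (n : ℤ) :
    fullShift^[k] x n = x (n - k) := by
  induction k generalizing n with
  | zero => simp
  | succ k ih =>
    rw [Function.iterate_succ_apply']
    simp only [fullShift]
    rw [ih]; congr 1; push_cast; ring

lemma continuous_recDist {M : Type*} [MetricSpace M] (k : ℕ) :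
    Continuous (fun x : ℤ → M => shiftDist (fullShift^[k] x) x) := by
  unfold shiftDist
  refine continuous_tsum (u := fun n : ℤ => (1 / 2 : ℝ) ^ n.natAbs) ?_ summable_half_natAbs ?_
  · intro n
    simp only [fullShift_iterate]
    refine continuous_const.mul (Continuous.div (by fun_prop) (by fun_prop) ?_)
    intro x
    positivity
  · intro n x
    rw [Real.norm_of_nonneg (shift_term_nonneg _ _ n)]
    exact shift_term_le _ _ n

lemma isOpen_slowSet {M : Type*} [MetricSpace M] (N : ℕ) : IsOpen (slowSet M N) := by
  have : slowSet M N = ⋃ r : {r : ℝ // 0 < r ∧ r < 1 / (N + 2)},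
      ⋂ k ∈ {k : ℕ | 1 ≤ k ∧ (k : ℝ) * r.1 ^ N ≤ 1},
        {x | r.1 < shiftDist (fullShift^[k] x) x} := by
    ext x
    simp [slowSet, and_assoc]
  rw [this]
  refine isOpen_iUnion fun r => Set.Finite.isOpen_biInter ?_ fun k _ =>
    isOpen_lt continuous_const (continuous_recDist k)
  have hr : 0 < r.1 ^ N := pow_pos r.2.1 N
  refine (Set.finite_Iic (⌊1 / r.1 ^ N⌋₊)).subset ?_
  rintro k ⟨_, hk⟩
  rw [Set.mem_Iic]
  apply Nat.le_floor
  rwa [le_div_iff₀ hr]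

lemma upperRecRate_eq_top_iff {M : Type*} [MetricSpace M] (x : ℤ → M) :
    upperRecRate shiftDist fullShift x = ⊤ ↔ ∀ N, x ∈ slowSet M N := by
  constructor
  · intro h N
    have h1 : (N : ℝ≥0∞) < limsup (recRatio shiftDist fullShift x) (𝓝[>] (0 : ℝ)) := by
      have : limsup (recRatio shiftDist fullShift x) (𝓝[>] (0 : ℝ)) = ⊤ := h
      rw [this]; exact ENNReal.natCast_lt_top N
    have h2 := frequently_lt_of_lt_limsup (by isBoundedDefault) h1
    have hpos : (0 : ℝ) < 1 / (N + 2) := by positivity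
    have h3 : ∀ᶠ r in 𝓝[>] (0 : ℝ), r ∈ Ioo (0 : ℝ) (1 / (N + 2)) := Ioo_mem_nhdsGT hpos
    obtain ⟨r, hr, hr0, hr1⟩ := (h2.and_eventually h3).exists
    refine ⟨r, hr0, hr1, ?_⟩
    intro k hk hkr
    by_contra hcon
    push Not at hcon
    have hex : ∃ n : ℕ, 1 ≤ n ∧ shiftDist (fullShift^[n] x) x ≤ r := ⟨k, hk, hcon⟩
    rw [recRatio, if_pos hex] at hr
    set n0 := sInf {n : ℕ | 1 ≤ n ∧ shiftDist (fullShift^[n] x) x ≤ r} with hn0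
    have hmem : n0 ∈ {n : ℕ | 1 ≤ n ∧ shiftDist (fullShift^[n] x) x ≤ r} := Nat.sInf_mem hex
    have hle : n0 ≤ k := Nat.sInf_le ⟨hk, hcon⟩
    have hr1' : r < 1 := hr1.trans_le (by rw [div_le_one (by positivity)]; linarith [(Nat.cast_nonneg N : (0:ℝ) ≤ N)])
    have hlog : 0 < - Real.log r := by linarith [Real.log_neg hr0 hr1']
    have hn0pos : (0 : ℝ) < n0 := by exact_mod_cast hmem.1
    have hA : (n0 : ℝ) * r ^ N ≤ 1 :=
      (mul_le_mul_of_nonneg_right (by exact_mod_cast hle) (by positivity)).trans hkr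
    have hB := Real.log_le_log (by positivity) hA
    rw [Real.log_mul (by positivity) (by positivity), Real.log_pow, Real.log_one] at hB
    have hC : Real.log n0 / (- Real.log r) ≤ N := by
      rw [div_le_iff₀ hlog]; linarith
    have := ENNReal.ofReal_le_ofReal hC
    rw [ENNReal.ofReal_natCast] at this
    exact absurd hr (not_lt.mpr this)
  · intro h
    refine ENNReal.eq_top_of_forall_nnreal_le fun c => ?_
    refine le_limsup_of_frequently_le ?_ (by isBoundedDefault)
    rw [frequently_iff]
    intro U hU
    obtain ⟨ε, hε, hεU⟩ := mem_nhdsGT_iff_exists_Ioo_subset.1 hU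
    obtain ⟨N1, hN1⟩ := exists_nat_ge (c : ℝ)
    obtain ⟨N2, hN2⟩ := exists_nat_ge (1 / ε)
    have hε' : 0 < ε := hε
    obtain ⟨r, hr0, hr1, hr⟩ := h (max N1 N2)
    set N := max N1 N2
    have hNc : (c : ℝ) ≤ N := hN1.trans (by exact_mod_cast le_max_left _ _)
    have hNε : 1 / ε ≤ N := hN2.trans (by exact_mod_cast le_max_right _ _)
    have hrε : r < ε := by
      refine hr1.trans_le ?_
      rw [div_le_iff₀ (by positivity)]
      rw [div_le_iff₀ hε'] at hNε
      nlinarith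
    refine ⟨r, hεU ⟨hr0, hrε⟩, ?_⟩
    rw [recRatio]
    split_ifs with hex
    · set n0 := sInf {n : ℕ | 1 ≤ n ∧ shiftDist (fullShift^[n] x) x ≤ r} with hn0
      have hmem : n0 ∈ {n : ℕ | 1 ≤ n ∧ shiftDist (fullShift^[n] x) x ≤ r} := Nat.sInf_mem hex
      have hr1' : r < 1 := hr1.trans_le (by rw [div_le_one (by positivity)]; linarith [(Nat.cast_nonneg N : (0:ℝ) ≤ N)])
      have hlog : 0 < - Real.log r := by linarith [Real.log_neg hr0 hr1']
      have hn0pos : (0 : ℝ) < n0 := by exact_mod_cast hmem.1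
      have hA : 1 < (n0 : ℝ) * r ^ N := by
        by_contra hcon
        exact absurd (hr n0 hmem.1 (not_lt.mp hcon)) (not_lt.mpr hmem.2)
      have hB := Real.log_le_log (by positivity) hA.le
      rw [Real.log_mul (by positivity) (by positivity), Real.log_pow, Real.log_one] at hB
      have hC : (c : ℝ) ≤ Real.log n0 / (- Real.log r) := by
        rw [le_div_iff₀ hlog]
        nlinarith
      rw [← ENNReal.ofReal_coe_nnreal]
      exact ENNReal.ofReal_le_ofReal hC
    · exact le_top

lemma isOpen_measure_gt {X : Type*} [TopologicalSpace X] [MeasurableSpace X]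
    [OpensMeasurableSpace X] [HasOuterApproxClosed X] {G : Set X} (hG : IsOpen G) (c : ℝ≥0∞) :
    IsOpen {μ : ProbabilityMeasure X | c < (μ : Measure X) G} := by
  rw [isOpen_iff_mem_nhds]
  intro μ hμ
  have h := ProbabilityMeasure.le_liminf_measure_open_of_tendsto
    (tendsto_id : Tendsto id (𝓝 μ) (𝓝 μ)) hG
  exact eventually_lt_of_lt_liminf (lt_of_lt_of_le hμ h)

lemma isGδ_fullMeasure {X : Type*} [TopologicalSpace X] [MeasurableSpace X]
    [OpensMeasurableSpace X] [HasOuterApproxClosed X] {G : Set X} (hG : IsOpen G) :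
    IsGδ {μ : ProbabilityMeasure X | ∀ᵐ x ∂(μ : Measure X), x ∈ G} := by
  obtain ⟨u, -, hu1, hu⟩ := exists_seq_strictMono_tendsto' (zero_lt_one : (0 : ℝ≥0∞) < 1)
  have : {μ : ProbabilityMeasure X | ∀ᵐ x ∂(μ : Measure X), x ∈ G} =
      ⋂ n : ℕ, {μ : ProbabilityMeasure X | u n < (μ : Measure X) G} := by
    ext μ
    have hiff : (∀ᵐ x ∂(μ : Measure X), x ∈ G) ↔ (μ : Measure X) G = 1 :=
      mem_ae_iff_prob_eq_one hG.measurableSet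
    simp only [mem_ofPred_eq, mem_iInter, hiff]
    constructor
    · intro h n
      rw [h]; exact (hu1 n).2
    · intro h
      exact le_antisymm prob_le_one (le_of_tendsto' hu fun n => (h n).le)
  rw [this]
  exact IsGδ.iInter fun n => (isOpen_measure_gt hG (u n)).isGδ

lemma exists_noAtoms_cantor : ∃ P : Measure (ℕ → Bool), IsProbabilityMeasure P ∧ NullSingletonClass P := by
  have hc : ¬ Countable (ℕ → Bool) := by
    rintro ⟨g, hg⟩
    let D : Set ℕ → (ℕ → Bool) := fun s n => @decide (n ∈ s) (Classical.propDecidable _)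
    have hD : Function.Injective D := by
      intro s t hst
      ext n
      simpa [D] using congrFun hst n
    exact Function.cantor_injective (g ∘ D) (hg.comp hD)
  have hr : ¬ Countable ℝ := not_countable
  let e : ℝ ≃ᵐ (ℕ → Bool) := PolishSpace.measurableEquivOfNotCountable hr hc
  let ν : Measure ℝ := volume.restrict (Icc 0 1)
  have hν : IsProbabilityMeasure ν := ⟨by simp [ν]⟩
  refine ⟨ν.map e, Measure.isProbabilityMeasure_map e.measurable.aemeasurable, ⟨fun x => ?_⟩⟩
  rw [e.map_apply]
  have : e ⁻¹' {x} = {e.symm x} := by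
    ext y
    simp [eq_comm, MeasurableEquiv.eq_symm_apply]
  rw [this]
  exact measure_singleton _

lemma uniform_noAtoms {M : Type*} [MetricSpace M] [MeasurableSpace M] [BorelSpace M]
    (P : Measure (ℕ → Bool)) [IsProbabilityMeasure P] [NullSingletonClass P]
    {f : (ℕ → Bool) → M} (hf : Continuous f) (hinj : Function.Injective f)
    {η : ℝ≥0∞} (hη : 0 < η) :
    ∀ᶠ δ in 𝓝[>] (0 : ℝ), ∀ w, P (f ⁻¹' closedBall w δ) ≤ η := by
  have hpt : ∀ w : M, ∃ δ > 0, P (f ⁻¹' ball w δ) < η := by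
    intro w
    have ht : Tendsto (P ∘ fun n : ℕ => f ⁻¹' ball w (1 / ((n : ℝ) + 1))) atTop
        (𝓝 (P (⋂ n : ℕ, f ⁻¹' ball w (1 / ((n : ℝ) + 1))))) := by
      refine tendsto_measure_iInter_atTop
        (fun n => (isOpen_ball.preimage hf).measurableSet.nullMeasurableSet) ?_
        ⟨0, measure_ne_top _ _⟩
      intro m n hmn
      exact preimage_mono (ball_subset_ball (Nat.one_div_le_one_div hmn))
    have h0 : P (⋂ n : ℕ, f ⁻¹' ball w (1 / ((n : ℝ) + 1))) = 0 := by
      refine Set.Subsingleton.measure_zero ?_ P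
      intro a ha b hb
      have key : ∀ a ∈ ⋂ n : ℕ, f ⁻¹' ball w (1 / ((n : ℝ) + 1)), f a = w := by
        intro a ha
        by_contra hne
        obtain ⟨n, hn⟩ := exists_nat_one_div_lt (dist_pos.2 hne)
        have := mem_iInter.1 ha n
        rw [mem_preimage, mem_ball] at this
        linarith
      exact hinj ((key a ha).trans (key b hb).symm)
    rw [h0] at ht
    obtain ⟨n, hn⟩ := (ht.eventually (gt_mem_nhds hη)).exists
    exact ⟨1 / ((n : ℝ) + 1), Nat.one_div_pos_of_nat, hn⟩
  choose δ hδ hδη using hpt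
  obtain ⟨d, hd, hcov⟩ := lebesgue_number_lemma_of_metric (isCompact_range hf)
    (c := fun w => ball w (δ w)) (fun w => isOpen_ball)
    (fun w _ => mem_iUnion.2 ⟨w, mem_ball_self (hδ w)⟩)
  have hd2 : 0 < d / 2 := by positivity
  filter_upwards [Ioo_mem_nhdsGT hd2] with ε hε w
  by_cases hne : ∃ a, f a ∈ closedBall w ε
  · obtain ⟨a, ha⟩ := hne
    obtain ⟨i, hi⟩ := hcov (f a) ⟨a, rfl⟩
    refine (measure_mono (preimage_mono ?_)).trans (hδη i).le
    refine Subset.trans ?_ hi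
    intro y hy
    rw [mem_closedBall] at ha hy
    rw [mem_ball]
    have := dist_triangle_right y (f a) w
    linarith [hε.2]
  · have : f ⁻¹' closedBall w ε = ∅ := by
      ext a; simp only [mem_preimage, mem_empty_iff_false, iff_false]
      exact fun h => hne ⟨a, h⟩
    rw [this]; simp

lemma exists_cantor_ball {M : Type*} [MetricSpace M] [CompleteSpace M] [PerfectSpace M]
    (m : M) {ε : ℝ} (hε : 0 < ε) : ∃ f : (ℕ → Bool) → M,
      Continuous f ∧ Function.Injective f ∧ ∀ a, dist (f a) m ≤ ε := by
  have h1 : Preperfect (ball m ε ∩ univ) :=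
    (PerfectSpace.univ_preperfect (α := M)).open_inter isOpen_ball
  rw [inter_univ] at h1
  obtain ⟨f, hf, hc, hi⟩ := h1.perfect_closure.exists_nat_bool_injection
    ⟨m, subset_closure (mem_ball_self hε)⟩
  exact ⟨f, hc, hi, fun a => closure_ball_subset_closedBall (hf ⟨a, rfl⟩)⟩

lemma indep_step {Ω S R : Type*} [MeasurableSpace Ω] [MeasurableSpace S] [MeasurableSpace R]
    (P : Measure Ω) [IsProbabilityMeasure P] {Z : Ω → S} {W : Ω → R} (hZ : Measurable Z)
    (hW : Measurable W) (hind : IndepFun W Z P) {A : Set R} (hA : MeasurableSet A)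
    {B : Set (R × S)} (hB : MeasurableSet B) (p : ℝ≥0∞)
    (hp : ∀ r, P (Z ⁻¹' (Prod.mk r ⁻¹' B)) ≤ p) :
    P {ω | W ω ∈ A ∧ (W ω, Z ω) ∈ B} ≤ p * P {ω | W ω ∈ A} := by
  have hmap := (indepFun_iff_map_prod_eq_prod_map_map hW.aemeasurable hZ.aemeasurable).1 hind
  have hm : Measurable (fun ω => (W ω, Z ω)) := hW.prodMk hZ
  have hC : MeasurableSet ((A ×ˢ univ) ∩ B) := (hA.prod MeasurableSet.univ).inter hB
  have e1 : {ω | W ω ∈ A ∧ (W ω, Z ω) ∈ B} = (fun ω => (W ω, Z ω)) ⁻¹' ((A ×ˢ univ) ∩ B) := by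
    ext ω; simp
  have e2 : {ω | W ω ∈ A} = W ⁻¹' A := rfl
  have := Measure.isProbabilityMeasure_map (μ := P) hZ.aemeasurable
  rw [e1, e2, ← Measure.map_apply hm hC, hmap, Measure.prod_apply hC, ← Measure.map_apply hW hA]
  calc ∫⁻ r, (P.map Z) (Prod.mk r ⁻¹' ((A ×ˢ univ) ∩ B)) ∂(P.map W)
      ≤ ∫⁻ r, A.indicator (fun _ => p) r ∂(P.map W) := by
        refine lintegral_mono fun r => ?_
        by_cases hr : r ∈ A
        · rw [indicator_of_mem hr]
          refine le_trans (measure_mono (t := Prod.mk r ⁻¹' B) (fun s hs => hs.2)) ?_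
          rw [Measure.map_apply hZ (measurable_prodMk_left hB)]
          exact hp r
        · have : Prod.mk r ⁻¹' ((A ×ˢ (univ : Set S)) ∩ B) = ∅ := by
            ext s; simp [hr]
          rw [this]; simp
    _ = p * (P.map W) A := by rw [lintegral_indicator_const hA]

lemma indep_window {Ω M : Type*} [MeasurableSpace Ω] [MetricSpace M]
    [TopologicalSpace.SeparableSpace M] [MeasurableSpace M] [BorelSpace M]
    (P : Measure Ω) [IsProbabilityMeasure P] {Z : ℤ → Ω → M} (hZ : ∀ n, Measurable (Z n))
    (hind : iIndepFun Z P) {δ : ℝ} {p : ℝ≥0∞}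
    (hp : ∀ n w, P (Z n ⁻¹' closedBall w δ) ≤ p) (k : ℕ) (hk : 1 ≤ k) (L : ℕ) :
    P {ω | ∀ n : ℕ, n < L → dist (Z ((n : ℤ) - k) ω) (Z n ω) ≤ δ} ≤ p ^ L := by
  have : SecondCountableTopology M := UniformSpace.secondCountable_of_separable M
  induction L with
  | zero => simp
  | succ L ih =>
    let S : Finset ℤ := Finset.Ico (-(k : ℤ)) L
    let T : Finset ℤ := {(L : ℤ)}
    have hd : Disjoint S T := by simp [S, T]
    have h1 := hind.indepFun_finset S T hd hZ
    have h2 : IndepFun (fun ω (i : S) => Z i ω) (Z L) P :=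
      h1.comp (φ := id) (ψ := fun v : T → M => v ⟨(L : ℤ), by simp [T]⟩) measurable_id (by fun_prop)
    have hmS : ∀ n : ℕ, n < L → (n : ℤ) ∈ S := by intro n hn; simp [S]; omega
    have hmS' : ∀ n : ℕ, n < L + 1 → (n : ℤ) - k ∈ S := by intro n hn; simp [S]; omega
    have hlt : ∀ n : ℕ, n < L → n < L + 1 := fun n hn => by omega
    let A : Set (S → M) := {v | ∀ (n : ℕ) (hn : n < L),
      dist (v ⟨(n : ℤ) - k, hmS' n (hlt n hn)⟩) (v ⟨n, hmS n hn⟩) ≤ δ}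
    let B : Set ((S → M) × M) := {v | dist (v.1 ⟨(L : ℤ) - k, hmS' L (by omega)⟩) v.2 ≤ δ}
    have hA : MeasurableSet A := by
      have : A = ⋂ (n : ℕ) (hn : n < L), {v | dist (v ⟨(n : ℤ) - k, hmS' n (hlt n hn)⟩)
          (v ⟨n, hmS n hn⟩) ≤ δ} := by ext v; simp [A]
      rw [this]
      exact MeasurableSet.iInter fun n => MeasurableSet.iInter fun hn =>
        measurableSet_le (by fun_prop) measurable_const
    have hB : MeasurableSet B := measurableSet_le (by fun_prop) measurable_const
    have h3 := indep_step P (hZ L) (measurable_pi_iff.2 fun i : S => hZ i) h2 hA hB p (by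
      intro r
      refine le_trans (measure_mono ?_) (hp L (r ⟨(L : ℤ) - k, hmS' L (by omega)⟩))
      intro ω hω
      simp only [B, mem_preimage, mem_ofPred_eq] at hω
      rw [mem_preimage, mem_closedBall, dist_comm]
      exact hω)
    calc P {ω | ∀ n : ℕ, n < L + 1 → dist (Z ((n : ℤ) - k) ω) (Z n ω) ≤ δ}
        ≤ _ := measure_mono ?_
      _ ≤ _ := h3
      _ ≤ p * p ^ L := by gcongr; exact ih
      _ = p ^ (L + 1) := by ring
    intro ω hω
    exact ⟨fun n hn => hω n (hlt n hn), hω L (by omega)⟩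

/-- An independent process with uniformly diffuse marginals is a.s. in `slowSet N`. -/
lemma indep_ae_slow {Ω M : Type*} [MeasurableSpace Ω] [MetricSpace M]
    [TopologicalSpace.SeparableSpace M] [MeasurableSpace M] [BorelSpace M]
    (P : Measure Ω) [IsProbabilityMeasure P] {Z : ℤ → Ω → M} (hZ : ∀ n, Measurable (Z n))
    (hind : iIndepFun Z P)
    (hp : ∀ η : ℝ≥0∞, 0 < η → ∃ δ : ℝ, 0 < δ ∧ ∀ n w, P (Z n ⁻¹' closedBall w δ) ≤ η) (N : ℕ) :
    P {ω | (fun n => Z n ω) ∉ slowSet M N} = 0 := by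
  obtain ⟨δ, hδ, hδp⟩ := hp ((2⁻¹ : ℝ≥0∞) ^ (N + 1)) (ENNReal.pow_pos (by simp) _)
  set c : ℝ := δ / (1 + δ) with hc
  have hc0 : 0 < c := by positivity
  let r : ℕ → ℝ := fun L => c * (1 / 2) ^ L
  have hr0 : ∀ L, 0 < r L := fun L => by positivity
  have hrt : Tendsto r atTop (𝓝 0) := by
    simpa [r] using (tendsto_pow_atTop_nhds_zero_of_lt_one (r := (1/2 : ℝ)) (by norm_num)
      (by norm_num)).const_mul c
  have hbound : ∀ᶠ L in atTop, P {ω | (fun n => Z n ω) ∉ slowSet M N} ≤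
      ENNReal.ofReal ((1 / c ^ N) * (1 / 2) ^ L) := by
    filter_upwards [hrt.eventually (gt_mem_nhds (show (0 : ℝ) < 1 / (N + 2) by positivity))]
      with L hL
    let K : ℕ := ⌊1 / r L ^ N⌋₊
    have hsub : {ω | (fun n => Z n ω) ∉ slowSet M N} ⊆
        ⋃ k ∈ Finset.Icc 1 K, {ω | ∀ n : ℕ, n < L → dist (Z ((n : ℤ) - k) ω) (Z n ω) ≤ δ} := by
      intro ω hω
      by_contra hcon
      apply hω
      refine ⟨r L, hr0 L, hL, fun k hk hkr => ?_⟩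
      by_contra hle
      push Not at hle
      apply hcon
      have hkK : k ≤ K := Nat.le_floor (by rwa [le_div_iff₀ (pow_pos (hr0 L) N)])
      simp only [mem_iUnion]
      refine ⟨k, Finset.mem_Icc.2 ⟨hk, hkK⟩, fun n hn => ?_⟩
      have h1 := (term_le_shiftDist _ _ (n : ℤ)).trans hle
      rw [fullShift_iterate, Int.natAbs_natCast] at h1
      set t := dist (Z ((n : ℤ) - k) ω) (Z n ω)
      have ht : 0 ≤ t := dist_nonneg
      have h2 : (1 / 2 : ℝ) ^ L ≤ (1 / 2) ^ n :=
        pow_le_pow_of_le_one (by norm_num) (by norm_num) hn.le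
      have h3 : (1 / 2 : ℝ) ^ L * (t / (1 + t)) ≤ (1 / 2) ^ L * c := by
        calc _ ≤ (1 / 2 : ℝ) ^ n * (t / (1 + t)) := by gcongr
          _ ≤ r L := h1
          _ = _ := mul_comm _ _
      have h4 : t / (1 + t) ≤ δ / (1 + δ) := le_of_mul_le_mul_left h3 (by positivity)
      rw [div_le_div_iff₀ (by positivity) (by positivity)] at h4
      nlinarith
    calc _ ≤ _ := measure_mono hsub
      _ ≤ ∑ k ∈ Finset.Icc 1 K, _ := measure_biUnion_finset_le _ _
      _ ≤ ∑ k ∈ Finset.Icc 1 K, ((2⁻¹ : ℝ≥0∞) ^ (N + 1)) ^ L :=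
        Finset.sum_le_sum fun k hk =>
          indep_window P hZ hind hδp k (Finset.mem_Icc.1 hk).1 L
      _ = ENNReal.ofReal (K * ((1 / 2) ^ (N + 1)) ^ L) := by
        rw [ENNReal.ofReal_mul (by positivity), ENNReal.ofReal_natCast,
          ENNReal.ofReal_pow (by positivity), ENNReal.ofReal_pow (by positivity)]
        have : ENNReal.ofReal (1 / 2) = 2⁻¹ := by
          rw [one_div, ENNReal.ofReal_inv_of_pos (by norm_num)]; simp
        rw [this]; simp
      _ ≤ _ := by
        apply ENNReal.ofReal_le_ofReal
        have hK : (K : ℝ) ≤ 1 / r L ^ N := Nat.floor_le (by have := hr0 L; positivity)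
        calc (K : ℝ) * ((1 / 2) ^ (N + 1)) ^ L ≤ 1 / r L ^ N * ((1 / 2) ^ (N + 1)) ^ L := by
              gcongr
          _ = _ := by
            simp only [r]
            rw [mul_pow, ← pow_mul, ← pow_mul, add_mul, one_mul, pow_add, mul_comm L N]
            field_simp
  have hlim : Tendsto (fun L : ℕ => ENNReal.ofReal ((1 / c ^ N) * (1 / 2) ^ L)) atTop (𝓝 0) := by
    have : Tendsto (fun L : ℕ => (1 / c ^ N) * (1 / 2 : ℝ) ^ L) atTop (𝓝 0) := by
      simpa using (tendsto_pow_atTop_nhds_zero_of_lt_one (r := (1/2 : ℝ)) (by norm_num)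
        (by norm_num)).const_mul (1 / c ^ N)
    simpa using ENNReal.tendsto_ofReal this
  exact le_antisymm (ge_of_tendsto hlim hbound) bot_le

lemma infinitePi_shift {C : Type*} [MeasurableSpace C] (P : Measure C) [IsProbabilityMeasure P] :
    (Measure.infinitePi (fun _ : ℤ => P)).map fullShift = Measure.infinitePi (fun _ : ℤ => P) := by
  have h := Measure.infinitePi_map_piCongrLeft (fun _ : ℤ => P) (Equiv.addRight (1 : ℤ))
  have hf : ⇑(MeasurableEquiv.piCongrLeft (fun _ : ℤ => C) (Equiv.addRight (1 : ℤ))) =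
      (fullShift : (ℤ → C) → ℤ → C) := by
    funext f i
    obtain ⟨a, rfl⟩ := (Equiv.addRight (1 : ℤ)).surjective i
    rw [MeasurableEquiv.piCongrLeft_apply_apply]
    simp [fullShift]
  rwa [hf] at h

lemma measurable_fullShift {C : Type*} [MeasurableSpace C] :
    Measurable (fullShift : (ℤ → C) → ℤ → C) :=
  measurable_pi_iff.2 fun i => measurable_pi_apply (i - 1)

/-- The coordinatewise perturbation map. -/
def perturb {M C : Type*} (q : M → ℕ) (g : ℕ → C → M) (z : (ℤ → M) × (ℤ → C)) : ℤ → M :=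
  fun n => g (q (z.1 n)) (z.2 n)

lemma measurable_perturb {M C : Type*} [MeasurableSpace M] [MeasurableSpace C] {q : M → ℕ}
    (hq : Measurable q) {g : ℕ → C → M} (hg : ∀ i, Measurable (g i)) :
    Measurable (perturb q g) := by
  refine measurable_pi_iff.2 fun n => ?_
  have h1 : Measurable (fun p : ℕ × C => g p.1 p.2) := measurable_from_prod_countable_right hg
  exact h1.comp ((hq.comp ((measurable_pi_apply n).comp measurable_fst)).prodMk
    ((measurable_pi_apply n).comp measurable_snd))

lemma perturb_invariant {M C : Type*} [MeasurableSpace M] [MeasurableSpace C] {q : M → ℕ}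
    (hq : Measurable q) {g : ℕ → C → M} (hg : ∀ i, Measurable (g i))
    (μ : Measure (ℤ → M)) [IsProbabilityMeasure μ] (hμ : μ.map fullShift = μ)
    (P : Measure C) [IsProbabilityMeasure P] :
    ((μ.prod (Measure.infinitePi (fun _ : ℤ => P))).map (perturb q g)).map fullShift =
      (μ.prod (Measure.infinitePi (fun _ : ℤ => P))).map (perturb q g) := by
  have hΦ := measurable_perturb hq hg
  rw [Measure.map_map measurable_fullShift hΦ]
  have hcomm : fullShift ∘ perturb q g = perturb q g ∘ Prod.map fullShift fullShift := by
    funext z; rfl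
  rw [hcomm, ← Measure.map_map hΦ (measurable_fullShift.prodMap measurable_fullShift),
    ← Measure.map_prod_map _ _ measurable_fullShift measurable_fullShift, hμ, infinitePi_shift]

lemma perturb_ae_slow {M : Type*} [MetricSpace M] [TopologicalSpace.SeparableSpace M]
    [MeasurableSpace M] [BorelSpace M] {q : M → ℕ}
    (hq : Measurable q) (J : ℕ) (hqJ : ∀ m, q m ≤ J) {g : ℕ → (ℕ → Bool) → M}
    (hg : ∀ i, Continuous (g i)) (hinj : ∀ i, Function.Injective (g i))
    (μ : Measure (ℤ → M)) [IsProbabilityMeasure μ]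
    (P : Measure (ℕ → Bool)) [IsProbabilityMeasure P] [NullSingletonClass P] (N : ℕ) :
    ∀ᵐ x ∂((μ.prod (Measure.infinitePi (fun _ : ℤ => P))).map (perturb q g)),
      x ∈ slowSet M N := by
  have : SecondCountableTopology M := UniformSpace.secondCountable_of_separable M
  have hgm : ∀ i, Measurable (g i) := fun i => (hg i).measurable
  have hΦ := measurable_perturb hq hgm
  have hms : MeasurableSet (slowSet M N) := (isOpen_slowSet N).measurableSet
  refine (ae_map_iff (p := fun x => x ∈ slowSet M N) hΦ.aemeasurable hms).2 ?_
  rw [ae_iff]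
  refine (Measure.measure_prod_null (hΦ hms.compl)).2 ?_
  refine Eventually.of_forall fun x => ?_
  refine indep_ae_slow (Measure.infinitePi (fun _ : ℤ => P))
    (Z := fun n u => g (q (x n)) (u n)) (fun n => (hgm _).comp (measurable_pi_apply n))
    (iIndepFun_infinitePi (P := fun _ : ℤ => P) (X := fun n => g (q (x n))) fun n => hgm _) ?_ N
  intro η hη
  have h1 : ∀ᶠ δ in 𝓝[>] (0 : ℝ), ∀ i ∈ Finset.range (J + 1), ∀ w,
      P (g i ⁻¹' closedBall w δ) ≤ η :=
    (Filter.eventually_all_finset _).2 fun i _ => uniform_noAtoms P (hg i) (hinj i) hη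
  obtain ⟨δ, hδ, hδ0⟩ := (h1.and self_mem_nhdsWithin).exists
  refine ⟨δ, hδ0, fun n w => ?_⟩
  have h2 := hδ (q (x n)) (Finset.mem_range.2 (Nat.lt_succ_of_le (hqJ _))) w
  have hm : MeasurableSet (g (q (x n)) ⁻¹' closedBall w δ) :=
    (hgm _) isClosed_closedBall.measurableSet
  have h3 : (fun u : ℤ → ℕ → Bool => g (q (x n)) (u n)) ⁻¹' closedBall w δ =
      (fun u : ℤ → ℕ → Bool => u n) ⁻¹' (g (q (x n)) ⁻¹' closedBall w δ) := rfl
  have h4 := Measure.infinitePi_map_eval (fun _ : ℤ => P) n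
  rw [h3, ← Measure.map_apply (measurable_pi_apply n) hm]
  refine le_trans (le_of_eq ?_) h2
  exact congrArg (fun ν : Measure (ℕ → Bool) => ν (g (q (x n)) ⁻¹' closedBall w δ)) h4

end Helpers

/-- For the full shift on `ℤ → M` over a perfect Polish metric space `M`,
the set of invariant measures whose upper recurrence rate is infinite almost everywhere is a
dense `Gδ` subset of `M(T)`. -/
theorem fullShift_upperRecRateInfinite_denseGδ {M : Type*} [MetricSpace M] [CompleteSpace M]
    [TopologicalSpace.SeparableSpace M] [PerfectSpace M]
    [MeasurableSpace M] [BorelSpace M] :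
    IsGδ {μ : {ν : ProbabilityMeasure (ℤ → M) // ν.toMeasure.map fullShift = ν.toMeasure} |
        ∀ᵐ x ∂μ.1.toMeasure, upperRecRate shiftDist fullShift x = ⊤} ∧
    Dense {μ : {ν : ProbabilityMeasure (ℤ → M) // ν.toMeasure.map fullShift = ν.toMeasure} |
        ∀ᵐ x ∂μ.1.toMeasure, upperRecRate shiftDist fullShift x = ⊤} := by
  have hsc : SecondCountableTopology M := UniformSpace.secondCountable_of_separable M
  have hset : ∀ μ : Measure (ℤ → M), (∀ᵐ x ∂μ, upperRecRate shiftDist fullShift x = ⊤) ↔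
      ∀ N, ∀ᵐ x ∂μ, x ∈ slowSet M N := by
    intro μ
    rw [← ae_all_iff]
    simp only [upperRecRate_eq_top_iff]
  simp only [hset]
  refine ⟨?_, ?_⟩
  · rw [ofPred_forall]
    exact IsGδ.iInter fun N => (isGδ_fullMeasure (isOpen_slowSet N)).preimage continuous_subtype_val
  · rintro ⟨μ, hμ⟩
    have hne : Nonempty (ℤ → M) := μ.nonempty
    have hneM : Nonempty M := ⟨hne.some 0⟩
    obtain ⟨P, hP, hPa⟩ := exists_noAtoms_cantor
    let e : ℕ → M := TopologicalSpace.denseSeq M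
    choose g hg hinj hdist using fun (j i : ℕ) =>
      exists_cantor_ball (e i) (show (0 : ℝ) < 1 / ((j : ℝ) + 1) from Nat.one_div_pos_of_nat)
    let q : ℕ → M → ℕ := fun j => SimpleFunc.nearestPtInd e j
    have hq : ∀ j, Measurable (q j) := fun j => (SimpleFunc.nearestPtInd e j).measurable
    have hΦ : ∀ j, Measurable (perturb (q j) (g j)) := fun j =>
      measurable_perturb (hq j) fun i => (hg j i).measurable
    let Q := (μ : Measure (ℤ → M)).prod (Measure.infinitePi (fun _ : ℤ => P))
    let ν : ℕ → ProbabilityMeasure (ℤ → M) := fun j =>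
      ⟨Q.map (perturb (q j) (g j)), Measure.isProbabilityMeasure_map (hΦ j).aemeasurable⟩
    have hν : ∀ j, (ν j : Measure (ℤ → M)).map fullShift = (ν j : Measure (ℤ → M)) := fun j =>
      perturb_invariant (hq j) (fun i => (hg j i).measurable) _ hμ P
    refine mem_closure_of_tendsto (f := fun j => ⟨ν j, hν j⟩) (b := atTop) ?_
      (Eventually.of_forall fun j N => ?_)
    · rw [tendsto_subtype_rng, ProbabilityMeasure.tendsto_iff_forall_integral_tendsto]
      intro f
      have h1 : ∀ j, ∫ x, f x ∂(ν j : Measure (ℤ → M)) = ∫ z, f (perturb (q j) (g j) z) ∂Q :=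
        fun j => integral_map (hΦ j).aemeasurable f.continuous.aestronglyMeasurable
      have h2 : ∫ x, f x ∂(μ : Measure (ℤ → M)) = ∫ z, f z.1 ∂Q := by
        have hfst : Q.map Prod.fst = (μ : Measure (ℤ → M)) := by simp [Q]
        conv_lhs => rw [← hfst]
        exact integral_map measurable_fst.aemeasurable f.continuous.aestronglyMeasurable
      simp only [h1, h2]
      refine tendsto_integral_of_dominated_convergence (fun _ => ‖f‖)
        (fun j => (f.continuous.measurable.comp (hΦ j)).aestronglyMeasurable)
        (integrable_const _) (fun j => Eventually.of_forall fun z => f.norm_coe_le_norm _)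
        (Eventually.of_forall fun z => ?_)
      refine (f.continuous.tendsto _).comp (tendsto_pi_nhds.2 fun n => ?_)
      have h3 : Tendsto (fun j => SimpleFunc.nearestPt e j (z.1 n)) atTop (𝓝 (z.1 n)) :=
        SimpleFunc.tendsto_nearestPt (by
          rw [(TopologicalSpace.denseRange_denseSeq M).closure_range]; trivial)
      refine tendsto_of_tendsto_of_dist h3 ?_
      refine squeeze_zero (fun _ => dist_nonneg) (fun j => ?_)
        tendsto_one_div_add_atTop_nhds_zero_nat
      rw [dist_comm]
      exact hdist j (q j (z.1 n)) (z.2 n)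
    · exact perturb_ae_slow (hq j) j (fun m => SimpleFunc.nearestPtInd_le e j m) (hg j) (hinj j) _ P N
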